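/- arXiv:2412.09937 — 2 statements merged into one kernel-verified Lean document; each statement's English description precedes it below -/
import Mathlib

section
/- Let q₁ be a prime power, let n ≥ 1 and 1 ≤ r ≤ n−1. The number of distinct Hermitian LCD codes of length n and dimension r over the field F_{q₁²} equals q₁^{r(n−r)} · ∏_{i=0}^{r−1} (q₁^{n−i} − (−1)^{n−i}) / (q₁^{r−i} − (−1)^{r−i}). -/
/-!
Count pairs (`C`, orthonormal basis of `C`) with `C` an `r`-dimensional LCD code. An orthonormal
`r`-tuple spans an LCD code, so there are as many pairs as orthonormal `r`-tuples in the whole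
space, and the number of codes is the quotient of the number of `r`-tuples in dimension `n` by the
same number in dimension `r`.

If `e` is a unit vector of a nondegenerate `W`, then `W ∩ e^⊥` is nondegenerate of dimension one
less, so orthonormal tuples are counted by choosing one unit vector after another. Unit vectors
are counted by the same descent: `w + a • e` with `w ∈ W ∩ e^⊥` is a unit vector if and only if
`a ^ (q + 1) = 1 - ⟪w, w⟫`, and the norm map `a ↦ a ^ (q + 1)` of `F_{q²} / F_q` takes `0` once and
every nonzero value of `F_q` exactly `q + 1` times.
-/

namespace HermitianLCD

open Module

section Counting

lemma natCast_card_sigma_eq_mul {α R : Type*} [Finite α] {β : α → Type*} [∀ a, Finite (β a)]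
    [Semiring R] {c : R} (h : ∀ a, (Nat.card (β a) : R) = c) :
    (Nat.card (Σ a, β a) : R) = Nat.card α * c := by
  have := Fintype.ofFinite α
  simp [Nat.card_sigma, h]

lemma card_pow_eq_of_pow_eq_one {G : Type*} [CommGroup G] [IsCyclic G] [Finite G] {d e : ℕ}
    (hG : Nat.card G = d * e) {x : G} (hx : x ^ e = 1) : Nat.card {y : G // y ^ d = x} = d := by
  have hd : 0 < d := Nat.pos_of_ne_zero fun h => Nat.card_pos.ne' (by rw [hG, h, zero_mul])
  have range_eq_ker : (powMonoidHom d : G →* G).range = (powMonoidHom e : G →* G).ker := by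
    refine Subgroup.eq_of_le_of_card_ge ?_ ?_
    · rintro _ ⟨y, rfl⟩
      rw [MonoidHom.mem_ker, powMonoidHom_apply, powMonoidHom_apply, ← pow_mul, ← hG,
        pow_card_eq_one']
    · rw [IsCyclic.card_powMonoidHom_range, IsCyclic.card_powMonoidHom_ker, hG,
        Nat.gcd_mul_left_left, Nat.gcd_mul_right_left, Nat.mul_div_cancel_left _ hd]
  obtain ⟨y, rfl⟩ : x ∈ (powMonoidHom d : G →* G).range := range_eq_ker ▸ hx
  calc Nat.card {z : G // z ^ d = y ^ d}
      = Nat.card (powMonoidHom d : G →* G).ker :=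
        Nat.card_congr ((powMonoidHom d : G →* G).fiberEquivKer y)
    _ = d := by rw [IsCyclic.card_powMonoidHom_ker, hG, Nat.gcd_mul_right_left]

end Counting

section FiniteField

variable {F : Type*} [Field F] [Fintype F] {q : ℕ}

lemma one_lt_of_card_eq_sq (hF : Fintype.card F = q ^ 2) : 1 < q :=
  (one_lt_pow_iff_of_nonneg q.zero_le two_ne_zero).1 (hF ▸ Fintype.one_lt_card)

lemma exists_ringHom_apply_eq_pow (hF : Fintype.card F = q ^ 2) :
    ∃ σ : F →+* F, ∀ a, σ a = a ^ q := by
  obtain ⟨p, k, hp, -, rfl⟩ :=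
    (isPrimePow_pow_iff two_ne_zero).1 (hF ▸ FiniteField.isPrimePow_card F)
  have : Fact p.Prime := ⟨hp.nat_prime⟩
  have : CharP F p := charP_of_card_eq_prime_pow (hF.trans (pow_mul p k 2).symm)
  exact ⟨iterateFrobenius F p k, iterateFrobenius_def p k⟩

lemma pow_pow_eq_self (hF : Fintype.card F = q ^ 2) (a : F) : (a ^ q) ^ q = a := by
  rw [← pow_mul, ← sq, ← hF, FiniteField.pow_card]

lemma exists_add_pow_ne_zero (hF : Fintype.card F = q ^ 2) : ∃ z : F, z + z ^ q ≠ 0 := by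
  by_contra! h
  have hq := one_lt_of_card_eq_sq hF
  have pow_eq_self (a : F) : a ^ q = a := by
    have two_eq_zero : (1 + 1 : F) = 0 := by simpa using h 1
    linear_combination h a - a * two_eq_zero
  have dvd : q ^ 2 - 1 ∣ q - 1 := hF ▸ (FiniteField.forall_pow_eq_one_iff F (q - 1)).1 fun u => by
    rw [pow_sub u hq.le, show u ^ q = u from Units.ext (pow_eq_self u), pow_one, mul_inv_cancel]
  have := Nat.le_of_dvd (Nat.sub_pos_of_lt hq) dvd
  have : q < q ^ 2 := lt_self_pow₀ hq one_lt_two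
  omega

lemma card_norm_eq (hF : Fintype.card F = q ^ 2) {c : F} (hc : c ≠ 0) (hcq : c ^ q = c) :
    Nat.card {a : F // a ^ (q + 1) = c} = q + 1 := by
  have hq := one_lt_of_card_eq_sq hF
  have card_units : Nat.card Fˣ = (q + 1) * (q - 1) := by
    rw [Nat.card_units, Nat.card_eq_fintype_card, hF, ← Nat.sq_sub_sq, one_pow]
  have pow_eq_one : Units.mk0 c hc ^ (q - 1) = 1 := by
    rw [pow_sub _ hq.le, show Units.mk0 c hc ^ q = Units.mk0 c hc from Units.ext hcq, pow_one,
      mul_inv_cancel]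
  let ofUnit (u : {u : Fˣ // u ^ (q + 1) = Units.mk0 c hc}) : {a : F // a ^ (q + 1) = c} :=
    ⟨u.1, congrArg Units.val u.2⟩
  have bijective : Function.Bijective ofUnit := by
    refine ⟨fun u v huv => Subtype.ext (Units.ext (congrArg Subtype.val huv)), fun ⟨a, ha⟩ => ?_⟩
    have ha0 : a ≠ 0 := by
      rintro rfl
      exact hc (by rw [← ha, zero_pow q.succ_ne_zero])
    exact ⟨⟨Units.mk0 a ha0, Units.ext ha⟩, rfl⟩
  rw [← Nat.card_congr (Equiv.ofBijective ofUnit bijective),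
    card_pow_eq_of_pow_eq_one card_units pow_eq_one]

lemma exists_norm_eq (hF : Fintype.card F = q ^ 2) {c : F} (hc : c ≠ 0) (hcq : c ^ q = c) :
    ∃ a : F, a ^ (q + 1) = c := by
  have card_pos : 0 < Nat.card {a : F // a ^ (q + 1) = c} := by
    rw [card_norm_eq hF hc hcq]
    exact q.succ_pos
  exact nonempty_subtype.1 (Nat.card_pos_iff.1 card_pos).1

end FiniteField

section Form

variable {F V : Type*} [Field F] {σ : F →+* F} [AddCommGroup V] [Module F V]

/-- The subspace `W` is LCD (linear with complementary dual) for the sesquilinear form `B`: it meets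
its orthogonal complement trivially. Equivalently, the restriction of `B` to `W` is
nondegenerate. -/
def IsLCD (B : V →ₛₗ[σ] V →ₗ[F] F) (W : Submodule F V) : Prop :=
  Disjoint W (W.orthogonalBilin B)

/-- The unit vectors of the subspace `W` for the sesquilinear form `B`. -/
def unitVectors (B : V →ₛₗ[σ] V →ₗ[F] F) (W : Submodule F V) : Set V :=
  {v | v ∈ W ∧ B v v = 1}

/-- The `r`-tuples of vectors of the subspace `W` that are orthonormal for the sesquilinear
form `B`. -/
def orthonormalTuples (B : V →ₛₗ[σ] V →ₗ[F] F) (r : ℕ) (W : Submodule F V) : Set (Fin r → V) :=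
  {t | (∀ i, t i ∈ W) ∧ ∀ i j, B (t i) (t j) = if i = j then 1 else 0}

variable {B : V →ₛₗ[σ] V →ₗ[F] F} {W : Submodule F V} {e : V}

lemma isLCD_iff : IsLCD B W ↔ ∀ x ∈ W, (∀ y ∈ W, B y x = 0) → x = 0 :=
  Submodule.disjoint_def

lemma sub_smul_mem_inf_ker (he : e ∈ unitVectors B W) {v : V} (hv : v ∈ W) :
    v - B e v • e ∈ W ⊓ (B e).ker :=
  ⟨W.sub_mem hv (W.smul_mem _ he.1), by simp [he.2]⟩

lemma finrank_inf_ker_add_one [Module.Finite F V] (he : e ∈ unitVectors B W) :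
    finrank F (W ⊓ (B e).ker : Submodule F V) + 1 = finrank F W := by
  have domRestrict_ne_zero : (B e).domRestrict W ≠ 0 := fun h =>
    one_ne_zero (he.2.symm.trans (LinearMap.congr_fun h ⟨e, he.1⟩))
  rw [← Dual.finrank_ker_add_one_of_ne_zero domRestrict_ne_zero, LinearMap.ker_domRestrict,
    ← Submodule.finrank_map_subtype_eq, Submodule.map_comap_subtype]

lemma IsLCD.inf_ker (hW : IsLCD B W) (he : e ∈ unitVectors B W) : IsLCD B (W ⊓ (B e).ker) := by
  rw [isLCD_iff] at hW ⊢
  rintro x ⟨hxW, hxe : B e x = 0⟩ hx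
  refine hW x hxW fun y hy => ?_
  simpa [hxe] using hx _ (sub_smul_mem_inf_ker he hy)

-- Polarization: if `B v v = 0` on all of `W`, expanding `B (x + a • y) (x + a • y)` leaves
-- `a * B x y + σ (a * B x y)`, and `a * B x y` may be any scalar.
lemma IsLCD.exists_apply_self_ne_zero (hB : B.IsSymm) (hσ : ∃ z, z + σ z ≠ 0) (hW : IsLCD B W)
    (hW0 : W ≠ ⊥) : ∃ v ∈ W, B v v ≠ 0 := by
  by_contra! isotropic
  obtain ⟨x, hx, hx0⟩ := W.exists_mem_ne_zero_of_ne_bot hW0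
  obtain ⟨y, hy, hyx⟩ : ∃ y ∈ W, B y x ≠ 0 := by
    by_contra! h
    exact hx0 (isLCD_iff.1 hW x hx h)
  obtain ⟨z, hz⟩ := hσ
  obtain ⟨a, rfl⟩ : ∃ a, z = a * B x y :=
    ⟨z / B x y, (div_mul_cancel₀ z (hB.eq_iff.not.1 hyx)).symm⟩
  rw [map_mul, hB.eq] at hz
  have expand := isotropic _ (W.add_mem hx (W.smul_mem a hy))
  simp only [map_add, map_smul, LinearMap.add_apply, LinearMap.map_smulₛₗ₂, smul_eq_mul,
    isotropic x hx, isotropic y hy, mul_zero, add_zero, zero_add] at expand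
  exact hz (by rwa [add_comm])

lemma apply_add_smul_self (hB : B.IsSymm) (hee : B e e = 1) {w : V} (hw : B e w = 0) (a : F) :
    B (w + a • e) (w + a • e) = B w w + σ a * a := by
  simp [hee, hw, hB.eq_iff.1 hw]

/-- The descent for unit vectors: `w + a • e` with `w ∈ W ∩ e^⊥` is a unit vector if and only if the
norm `σ a * a` of `a` is `1 - B w w`. -/
def unitVectorsEquiv (hB : B.IsSymm) (he : e ∈ unitVectors B W) :
    unitVectors B W ≃
      Σ w : (W ⊓ (B e).ker : Submodule F V), {a : F // σ a * a = 1 - B w.1 w.1} where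
  toFun v := ⟨⟨v.1 - B e v.1 • e, sub_smul_mem_inf_ker he v.2.1⟩, B e v.1, by
    have := apply_add_smul_self hB he.2 (sub_smul_mem_inf_ker he v.2.1).2 (B e v.1)
    rw [sub_add_cancel, v.2.2] at this
    exact eq_sub_of_add_eq' this.symm⟩
  invFun p := ⟨p.1.1 + p.2.1 • e, W.add_mem p.1.2.1 (W.smul_mem _ he.1), by
    rw [apply_add_smul_self hB he.2 p.1.2.2, p.2.2, add_sub_cancel]⟩
  left_inv v := Subtype.ext (sub_add_cancel _ _)
  right_inv := by
    rintro ⟨⟨w, hw⟩, a, ha⟩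
    have coeff : B e (w + a • e) = a := by simp [show B e w = 0 from hw.2, he.2]
    refine Sigma.subtype_ext (Subtype.ext ?_) coeff
    simp only [coeff, add_sub_cancel_right]

lemma linearIndependent_of_mem_orthonormalTuples {r : ℕ} {t : Fin r → V}
    (ht : t ∈ orthonormalTuples B r W) : LinearIndependent F t :=
  LinearMap.linearIndependent_of_isOrthoᵢ
    (LinearMap.isOrthoᵢ_def.2 fun i j hij => by rw [ht.2, if_neg hij]) fun i => by simp [ht.2]

lemma finrank_span_of_mem_orthonormalTuples {r : ℕ} {t : Fin r → V}
    (ht : t ∈ orthonormalTuples B r W) : finrank F (Submodule.span F (Set.range t)) = r := by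
  rw [finrank_span_eq_card (linearIndependent_of_mem_orthonormalTuples ht), Fintype.card_fin]

lemma isLCD_span_of_mem_orthonormalTuples {r : ℕ} {t : Fin r → V}
    (ht : t ∈ orthonormalTuples B r W) : IsLCD B (Submodule.span F (Set.range t)) := by
  refine isLCD_iff.2 fun x hx hxt => ?_
  obtain ⟨g, rfl⟩ := (Submodule.mem_span_range_iff_exists_fun F).1 hx
  have coeff_eq_zero (i : Fin r) : g i = 0 := by
    simpa [ht.2] using hxt (t i) (Submodule.subset_span ⟨i, rfl⟩)
  simp [coeff_eq_zero]

lemma span_eq_of_mem_orthonormalTuples [Module.Finite F V] {r : ℕ} {t : Fin r → V}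
    (ht : t ∈ orthonormalTuples B r W) (hW : finrank F W = r) :
    Submodule.span F (Set.range t) = W :=
  Submodule.eq_of_le_of_finrank_eq (Submodule.span_le.2 (Set.range_subset_iff.2 ht.1))
    (by rw [finrank_span_of_mem_orthonormalTuples ht, hW])

/-- The descent for orthonormal tuples: the first vector `e` is any unit vector of `W`, and the
others form an orthonormal tuple of `W ∩ e^⊥`. -/
def orthonormalTuplesSuccEquiv (hB : B.IsSymm) (r : ℕ) (W : Submodule F V) :
    orthonormalTuples B (r + 1) W ≃
      Σ e : unitVectors B W, orthonormalTuples B r (W ⊓ (B e.1).ker) where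
  toFun t := ⟨⟨t.1 0, t.2.1 0, by simp [t.2.2]⟩, Fin.tail t.1,
    fun i => ⟨t.2.1 i.succ, by simp [Fin.tail, t.2.2, (Fin.succ_ne_zero i).symm]⟩,
    fun i j => by simp [Fin.tail, t.2.2]⟩
  invFun p := ⟨Fin.cons p.1.1 p.2.1, Fin.cases p.1.2.1 fun i => (p.2.2.1 i).1, by
    have left_ortho (i : Fin r) : B p.1.1 (p.2.1 i) = 0 := (p.2.2.1 i).2
    have right_ortho (i : Fin r) : B (p.2.1 i) p.1.1 = 0 := hB.eq_iff.1 (left_ortho i)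
    refine Fin.cases (Fin.cases ?_ fun j => ?_) fun i => Fin.cases ?_ fun j => ?_
    · simpa using p.1.2.2
    · simpa [(Fin.succ_ne_zero j).symm] using left_ortho j
    · simpa using right_ortho i
    · simpa using p.2.2.2 i j⟩
  left_inv t := Subtype.ext (Fin.cons_self_tail t.1)
  right_inv _ := rfl

/-- An orthonormal `r`-tuple is an orthonormal basis of exactly one `r`-dimensional LCD subspace,
its span. -/
def orthonormalTuplesEquivSigma [Module.Finite F V] (B : V →ₛₗ[σ] V →ₗ[F] F) (r : ℕ) :
    orthonormalTuples B r ⊤ ≃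
      Σ C : {C : Submodule F V // finrank F C = r ∧ IsLCD B C}, orthonormalTuples B r C.1 where
  toFun t := ⟨⟨Submodule.span F (Set.range t.1), finrank_span_of_mem_orthonormalTuples t.2,
    isLCD_span_of_mem_orthonormalTuples t.2⟩, t.1, fun i => Submodule.subset_span ⟨i, rfl⟩, t.2.2⟩
  invFun p := ⟨p.2.1, fun _ => Submodule.mem_top, p.2.2.2⟩
  left_inv _ := rfl
  right_inv := by
    rintro ⟨⟨C, hC, hLCD⟩, t, ht⟩
    obtain rfl := span_eq_of_mem_orthonormalTuples ht hC
    rfl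

end Form

section HermitianForm

variable {F V : Type*} [Field F] [Fintype F] {q : ℕ} {σ : F →+* F} [AddCommGroup V] [Module F V]
  {B : V →ₛₗ[σ] V →ₗ[F] F} {W : Submodule F V} {e : V}

lemma exists_mem_unitVectors (hF : Fintype.card F = q ^ 2) (hσ : ∀ a, σ a = a ^ q)
    (hB : B.IsSymm) (hW : IsLCD B W) (hW0 : W ≠ ⊥) : ∃ e, e ∈ unitVectors B W := by
  obtain ⟨v, hv, hvv⟩ :=
    hW.exists_apply_self_ne_zero hB (by simpa only [hσ] using exists_add_pow_ne_zero hF) hW0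
  obtain ⟨a, ha⟩ := exists_norm_eq hF (inv_ne_zero hvv) (by rw [inv_pow, ← hσ, hB.eq])
  refine ⟨a • v, W.smul_mem a hv, ?_⟩
  rw [LinearMap.map_smulₛₗ₂, map_smul, hσ, smul_eq_mul, smul_eq_mul, ← mul_assoc, ← pow_succ, ha,
    inv_mul_cancel₀ hvv]

lemma card_unitVectors_add [Finite V] (hF : Fintype.card F = q ^ 2) (hσ : ∀ a, σ a = a ^ q)
    (hB : B.IsSymm) (he : e ∈ unitVectors B W) :
    Nat.card (unitVectors B W) + q * Nat.card (unitVectors B (W ⊓ (B e).ker)) =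
      (q + 1) * Nat.card (W ⊓ (B e).ker : Submodule F V) := by
  classical
  set U := W ⊓ (B e).ker
  have := Fintype.ofFinite U
  have card_fiber (w : U) : Nat.card {a : F // σ a * a = 1 - B w.1 w.1} +
      q * (if B w.1 w.1 = 1 then 1 else 0) = q + 1 := by
    simp only [hσ, ← pow_succ]
    split_ifs with hw
    · simp [hw, add_comm]
    · have norm_mem : (1 - B w.1 w.1) ^ q = 1 - B w.1 w.1 := by
        rw [← hσ, map_sub, map_one, hB.eq]
      rw [card_norm_eq hF (sub_ne_zero.2 (Ne.symm hw)) norm_mem, mul_zero, add_zero]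
  have card_unit : Nat.card (unitVectors B U) = ∑ w : U, if B w.1 w.1 = 1 then 1 else 0 := by
    rw [← Finset.card_filter, ← Fintype.card_subtype, ← Nat.card_eq_fintype_card]
    exact Nat.card_congr (Equiv.subtypeSubtypeEquivSubtypeInter (· ∈ U) (fun v => B v v = 1)).symm
  rw [Nat.card_congr (unitVectorsEquiv hB he), Nat.card_sigma, card_unit, Finset.mul_sum,
    ← Finset.sum_add_distrib, Finset.sum_congr rfl fun w _ => card_fiber w, Finset.sum_const,
    Finset.card_univ, ← Nat.card_eq_fintype_card, smul_eq_mul, mul_comm]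

/-- The number of unit vectors of an `m`-dimensional nondegenerate Hermitian space over
`F_{q²}`. -/
def unitVectorCount (q m : ℕ) : ℚ := q ^ m * (q ^ m - (-1) ^ m) / q

theorem card_unitVectors [Finite V] (hF : Fintype.card F = q ^ 2) (hσ : ∀ a, σ a = a ^ q)
    (hB : B.IsSymm) {m : ℕ} (hW : IsLCD B W) (hm : finrank F W = m) :
    (Nat.card (unitVectors B W) : ℚ) = unitVectorCount q m := by
  have : Module.Finite F V := Module.Finite.of_finite
  induction m generalizing W with
  | zero =>
    have isEmpty : IsEmpty (unitVectors B W) := by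
      rw [Submodule.finrank_eq_zero] at hm
      exact ⟨by rintro ⟨v, hv, hvv⟩; simp_all⟩
    simp [unitVectorCount]
  | succ m ih =>
    obtain ⟨e, he⟩ := exists_mem_unitVectors hF hσ hB hW (by rintro rfl; simp at hm)
    have finrank_eq : finrank F (W ⊓ (B e).ker : Submodule F V) = m := by
      have := finrank_inf_ker_add_one he
      omega
    have card_eq : (Nat.card (W ⊓ (B e).ker : Submodule F V) : ℚ) = ((q : ℚ) ^ 2) ^ m := by
      rw [Module.natCard_eq_pow_finrank (K := F), finrank_eq, Nat.card_eq_fintype_card, hF]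
      push_cast
      rfl
    have descent : (Nat.card (unitVectors B W) : ℚ) + q * unitVectorCount q m =
        (q + 1) * ((q : ℚ) ^ 2) ^ m := by
      rw [← ih (hW.inf_ker he) finrank_eq, ← card_eq]
      exact_mod_cast card_unitVectors_add hF hσ hB he
    have hq : (q : ℚ) ≠ 0 := Nat.cast_ne_zero.2 (one_lt_of_card_eq_sq hF).ne_bot
    rw [eq_sub_of_add_eq descent, unitVectorCount, unitVectorCount]
    field_simp
    ring

theorem card_orthonormalTuples [Finite V] (hF : Fintype.card F = q ^ 2) (hσ : ∀ a, σ a = a ^ q)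
    (hB : B.IsSymm) (r : ℕ) {m : ℕ} (hW : IsLCD B W) (hm : finrank F W = m) :
    (Nat.card (orthonormalTuples B r W) : ℚ) =
      ∏ i ∈ Finset.range r, unitVectorCount q (m - i) := by
  have : Module.Finite F V := Module.Finite.of_finite
  induction r generalizing W m with
  | zero =>
    have : Unique (orthonormalTuples B 0 W) :=
      ⟨⟨⟨Fin.elim0, fun i => i.elim0, fun i => i.elim0⟩⟩, fun _ => Subsingleton.elim _ _⟩
    simp
  | succ r ih =>
    have card_tail (e : unitVectors B W) :
        (Nat.card (orthonormalTuples B r (W ⊓ (B e.1).ker)) : ℚ) =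
          ∏ i ∈ Finset.range r, unitVectorCount q (m - 1 - i) :=
      ih (hW.inf_ker e.2) (by have := finrank_inf_ker_add_one e.2; omega)
    rw [Nat.card_congr (orthonormalTuplesSuccEquiv hB r W), natCast_card_sigma_eq_mul card_tail,
      card_unitVectors hF hσ hB hW hm, Finset.prod_range_succ', mul_comm]
    simp only [Nat.sub_sub, Nat.add_comm 1, Nat.sub_zero]

lemma unitVectorCount_ne_zero {m : ℕ} (hq : 1 < q) (hm : m ≠ 0) : unitVectorCount q m ≠ 0 := by
  have one_lt_pow : 1 < (q : ℚ) ^ m := one_lt_pow₀ (by exact_mod_cast hq) hm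
  have neg_one_pow_le : (-1 : ℚ) ^ m ≤ 1 := (le_abs_self _).trans (abs_neg_one_pow m).le
  have factor_ne_zero : (q : ℚ) ^ m - (-1) ^ m ≠ 0 := by linarith
  have hq0 : (q : ℚ) ≠ 0 := Nat.cast_ne_zero.2 hq.ne_bot
  exact div_ne_zero (mul_ne_zero (pow_ne_zero m hq0) factor_ne_zero) hq0

lemma unitVectorCount_add_div {m k : ℕ} (hq : q ≠ 0) :
    unitVectorCount q (k + m) / unitVectorCount q m =
      q ^ k * ((q ^ (k + m) - (-1) ^ (k + m)) / (q ^ m - (-1) ^ m)) := by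
  have hq0 : (q : ℚ) ≠ 0 := Nat.cast_ne_zero.2 hq
  rw [unitVectorCount, unitVectorCount, div_div_div_cancel_right₀ hq0, mul_div_mul_comm, pow_add,
    mul_div_cancel_right₀ _ (pow_ne_zero m hq0)]

theorem card_isLCD [Finite V] (hF : Fintype.card F = q ^ 2) (hσ : ∀ a, σ a = a ^ q)
    (hB : B.IsSymm) (hV : IsLCD B ⊤) {n r : ℕ} (hn : finrank F V = n) (hr : r ≤ n) :
    (Nat.card {C : Submodule F V // finrank F C = r ∧ IsLCD B C} : ℚ) =
      (q : ℚ) ^ (r * (n - r)) * ∏ i ∈ Finset.range r,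
        ((q : ℚ) ^ (n - i) - (-1) ^ (n - i)) / ((q : ℚ) ^ (r - i) - (-1) ^ (r - i)) := by
  have : Module.Finite F V := Module.Finite.of_finite
  have hq := one_lt_of_card_eq_sq hF
  have double_count : (Nat.card {C : Submodule F V // finrank F C = r ∧ IsLCD B C} : ℚ) *
      ∏ i ∈ Finset.range r, unitVectorCount q (r - i) =
        ∏ i ∈ Finset.range r, unitVectorCount q (n - i) :=
    calc _ = (Nat.card (Σ C : {C : Submodule F V // finrank F C = r ∧ IsLCD B C},
              orthonormalTuples B r C.1) : ℚ) :=
          (natCast_card_sigma_eq_mul fun C =>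
            card_orthonormalTuples hF hσ hB r C.2.2 C.2.1).symm
      _ = Nat.card (orthonormalTuples B r (⊤ : Submodule F V)) := by
          rw [Nat.card_congr (orthonormalTuplesEquivSigma B r)]
      _ = _ := card_orthonormalTuples hF hσ hB r hV ((finrank_top F V).trans hn)
  have prod_ne_zero : ∏ i ∈ Finset.range r, unitVectorCount q (r - i) ≠ 0 :=
    Finset.prod_ne_zero_iff.2 fun i hi =>
      unitVectorCount_ne_zero hq (Nat.sub_ne_zero_of_lt (Finset.mem_range.1 hi))
  rw [eq_div_of_mul_eq prod_ne_zero double_count, ← Finset.prod_div_distrib, mul_comm r, pow_mul,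
    ← Finset.card_range r, ← Finset.prod_const, Finset.card_range, ← Finset.prod_mul_distrib]
  refine Finset.prod_congr rfl fun i hi => ?_
  rw [show n - i = n - r + (r - i) by have := Finset.mem_range.1 hi; omega]
  exact unitVectorCount_add_div hq.ne_bot

end HermitianForm

section StandardForm

variable {F ι : Type*} [Field F] [Fintype ι] {σ : F →+* F}

/-- The form `[x, y] = ∑ i, x i * σ (y i)` on `ι → F`, the Hermitian inner product when `σ` is the
`q`-th power map. Sesquilinear forms are semilinear in their first argument, so the arguments are
exchanged: `hermitianForm σ y x = [x, y]`. -/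
def hermitianForm (σ : F →+* F) : (ι → F) →ₛₗ[σ] (ι → F) →ₗ[F] F :=
  LinearMap.mk₂'ₛₗ σ (RingHom.id F) (fun y x => ∑ i, x i * σ (y i))
    (fun _ _ _ => by simp [mul_add, Finset.sum_add_distrib])
    (fun _ _ _ => by simp [Finset.mul_sum, mul_left_comm])
    (fun _ _ _ => by simp [add_mul, Finset.sum_add_distrib])
    (fun _ _ _ => by simp [Finset.mul_sum, mul_assoc])

lemma hermitianForm_apply (y x : ι → F) : hermitianForm σ y x = ∑ i, x i * σ (y i) :=
  rfl

lemma isSymm_hermitianForm (hσ : Function.Involutive σ) :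
    (hermitianForm σ : (ι → F) →ₛₗ[σ] (ι → F) →ₗ[F] F).IsSymm :=
  ⟨fun x y => by simp [hermitianForm_apply, hσ _, mul_comm]⟩

lemma isLCD_top_hermitianForm : IsLCD (hermitianForm σ : (ι → F) →ₛₗ[σ] (ι → F) →ₗ[F] F) ⊤ := by
  classical
  refine isLCD_iff.2 fun x _ hx => funext fun i => ?_
  simpa [hermitianForm_apply, Pi.single_apply, apply_ite σ] using
    hx (Pi.single i 1) Submodule.mem_top

lemma inter_dual_eq_zero_iff_isLCD (C : Submodule F (ι → F)) :
    (C : Set (ι → F)) ∩ {x | ∀ c ∈ C, ∑ i, x i * σ (c i) = 0} = {0} ↔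
      IsLCD (hermitianForm σ) C := by
  rw [IsLCD, disjoint_iff, SetLike.ext'_iff (A := Submodule F (ι → F))]
  rfl

end StandardForm

end HermitianLCD

open HermitianLCD in
/-- The number of Hermitian LCD codes of length `n` and dimension `r` (with
`1 ≤ r ≤ n-1`) over the field of order `q₁²` equals
`q₁^{r(n-r)} · ∏_{i=0}^{r-1} (q₁^{n-i} - (-1)^{n-i})/(q₁^{r-i} - (-1)^{r-i})`. -/
theorem stmt7 {F : Type*} [Field F] [Fintype F] (q₁ n r : ℕ)
    (hq : IsPrimePow q₁) (hcard : Fintype.card F = q₁ ^ 2)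
    (hn : 1 ≤ n) (hr : 1 ≤ r) (hrn : r ≤ n - 1) :
    (Nat.card {C : Submodule F (Fin n → F) //
        Module.finrank F C = r ∧
        (C : Set (Fin n → F)) ∩ {x | ∀ c ∈ C, ∑ i, x i * (c i) ^ q₁ = 0} = {0}} : ℚ) =
      (q₁ : ℚ) ^ (r * (n - r)) *
        ∏ i ∈ Finset.range r,
          ((q₁ : ℚ) ^ (n - i) - (-1 : ℚ) ^ (n - i)) /
            ((q₁ : ℚ) ^ (r - i) - (-1 : ℚ) ^ (r - i)) := by
  obtain ⟨σ, hσ⟩ := exists_ringHom_apply_eq_pow hcard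
  have involutive : Function.Involutive σ := fun a => by
    rw [hσ, hσ, pow_pow_eq_self hcard]
  simp only [← hσ, inter_dual_eq_zero_iff_isLCD]
  exact card_isLCD hcard hσ (isSymm_hermitianForm involutive) isLCD_top_hermitianForm
    (Module.finrank_fin_fun F) (hrn.trans n.pred_le)
end

section
/- Let q be an odd prime power and let n, r be even integers with 1 ≤ r ≤ n−1. The number of distinct Euclidean LCD codes of length n and dimension r over F_q equals q^{r(n−r)/2} multiplied by the Gaussian binomial coefficient [n/2 choose r/2]_{q²}. -/
/-- The Gaussian binomial coefficient `[m choose j]_Q` as a rational number. -/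
noncomputable def gaussBinom (Q m j : ℕ) : ℚ :=
  ∏ i ∈ Finset.range j, ((Q : ℚ) ^ (m - i) - 1) / ((Q : ℚ) ^ (j - i) - 1)

/-!
A nondegenerate quadratic form in an odd number `m` of variables over `F_q` has exactly
`q ^ (m - 1)` zeros: each variable `a x²` split off the form multiplies by `-1` the factor by which
the deviation from equidistribution changes when the value is scaled by a nonsquare, so for odd `m`
the deviation at the value `0` is its own negative.

Let `n = dim V` be even and `x ≠ 0`. The vectors `y` with vanishing Gram determinant against `x`
form the hyperplane `x^⊥` if `x` is isotropic; otherwise they are the sums of a vector on the line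
of `x` and an isotropic vector of the odd-dimensional space `x^⊥`. Either way there are
`q ^ (n - 1)` of them, so `(q ^ n - 1) (q ^ n - q ^ (n - 1))` pairs have nonzero Gram determinant.

Finally, `C ↦ C ∩ W^⊥` identifies the LCD codes containing a nondegenerate plane `W` with the LCD
codes in `W^⊥`. Counting in two ways the LCD codes together with a pair of their vectors of nonzero
Gram determinant therefore gives the recurrence of the Gaussian binomial coefficients at `q²`.
-/

open Module
open LinearMap (BilinForm)

lemma gaussBinom_succ_succ (Q m j : ℕ) : gaussBinom Q (m + 1) (j + 1) =
    ((Q : ℚ) ^ (m + 1) - 1) / ((Q : ℚ) ^ (j + 1) - 1) * gaussBinom Q m j := by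
  rw [gaussBinom, Finset.prod_range_succ', mul_comm]
  simp only [Nat.add_sub_add_right, Nat.sub_zero, gaussBinom]

lemma natCard_mul_eq_natCard_mul {α β S : Type*} [Finite α] [Finite β] [NonAssocSemiring S]
    {R : α → β → Prop} {m n : S} (hm : ∀ a, (Nat.card {b // R a b} : S) = m)
    (hn : ∀ b, (Nat.card {a // R a b} : S) = n) : (Nat.card α : S) * m = Nat.card β * n := by
  have := Fintype.ofFinite α
  have := Fintype.ofFinite β
  have hflags : ∑ a, Nat.card {b // R a b} = ∑ b, Nat.card {a // R a b} := by
    rw [← Nat.card_sigma, ← Nat.card_sigma,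
      ← Nat.card_congr (Equiv.subtypeProdEquivSigmaSubtype R),
      ← Nat.card_congr (Equiv.subtypeProdEquivSigmaSubtype fun b a ↦ R a b)]
    exact Nat.card_congr ((Equiv.prodComm α β).subtypeEquiv fun _ ↦ Iff.rfl)
  have hcast := congrArg (Nat.cast : ℕ → S) hflags
  simpa only [Nat.cast_sum, hm, hn, Finset.sum_const, Finset.card_univ, nsmul_eq_mul,
    ← Nat.card_eq_fintype_card] using hcast

/-! ### Values of quadratic forms in an odd number of variables -/

section FiberExcess

variable {X Y A : Type*}

/-- The number of solutions of `f x = c` minus its average over all `c`; it measures how far the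
values of `f` are from being equidistributed. -/
noncomputable def fiberExcess (f : X → A) (c : A) : ℚ :=
  Nat.card {x // f x = c} - Nat.card X / Nat.card A

lemma fiberExcess_congr {f : X → A} {g : Y → A} (e : X ≃ Y) (h : ∀ x, g (e x) = f x) (c : A) :
    fiberExcess f c = fiberExcess g c := by
  rw [fiberExcess, fiberExcess, Nat.card_congr e,
    Nat.card_congr (e.subtypeEquiv fun x ↦ by rw [h x] : {x // f x = c} ≃ {y // g y = c})]

lemma sum_fiberExcess [Finite X] [Fintype A] [Nonempty A] (f : X → A) :
    ∑ c, fiberExcess f c = 0 := by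
  have hX : ∑ c, Nat.card {x // f x = c} = Nat.card X := by
    rw [← Nat.card_sigma, Nat.card_congr (Equiv.sigmaFiberEquiv f)]
  simp only [fiberExcess, Finset.sum_sub_distrib, Finset.sum_const, Finset.card_univ, nsmul_eq_mul,
    Nat.card_eq_fintype_card (α := A)]
  rw [mul_div_cancel₀ _ (Nat.cast_ne_zero.2 Fintype.card_ne_zero), ← Nat.cast_sum, hX, sub_self]

lemma fiberExcess_add [AddCommGroup A] [Finite X] [Fintype Y] (g : Y → A) (f : X → A) (c : A) :
    fiberExcess (fun p : Y × X ↦ g p.1 + f p.2) c = ∑ y, fiberExcess f (c - g y) := by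
  have hfiber : Nat.card {p : Y × X // g p.1 + f p.2 = c} =
      ∑ y, Nat.card {x // f x = c - g y} := by
    simp only [← Nat.card_sigma, eq_sub_iff_add_eq', ← Nat.card_congr
      (Equiv.subtypeProdEquivSigmaSubtype fun (y : Y) (x : X) ↦ g y + f x = c)]
  simp only [fiberExcess, Finset.sum_sub_distrib, Finset.sum_const, Finset.card_univ, nsmul_eq_mul]
  rw [hfiber, Nat.cast_sum, Nat.card_prod, Nat.cast_mul, Nat.card_eq_fintype_card (α := Y),
    mul_div_assoc]

variable {F : Type*} [Field F] {ν : F}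

lemma sum_sq_add_sum_mul_sq [Fintype F] (hF : ringChar F ≠ 2) (hν : ¬IsSquare ν) {M : Type*}
    [AddCommMonoid M] (f : F → M) : ∑ x, f (x ^ 2) + ∑ x, f (ν * x ^ 2) = 2 • ∑ y, f y := by
  classical
  have hν0 : ν ≠ 0 := by rintro rfl; exact hν IsSquare.zero
  have card_sqrt (y : F) : (({x | x ^ 2 = y} : Finset F).card : ℤ) = quadraticChar F y + 1 := by
    rw [← quadraticChar_card_sqrts hF y, Set.toFinset_ofPred]
  have card_add_card (y : F) :
      ({x | x ^ 2 = y} : Finset F).card + ({x | ν * x ^ 2 = y} : Finset F).card = 2 := by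
    have hχ : quadraticChar F ν⁻¹ = -1 := by
      rwa [quadraticChar_neg_one_iff_not_isSquare, isSquare_inv]
    have := card_sqrt y
    have := card_sqrt (ν⁻¹ * y)
    simp only [eq_inv_mul_iff_mul_eq₀ hν0, map_mul, hχ] at this
    omega
  rw [← Finset.sum_fiberwise' _ (fun x : F ↦ x ^ 2), ← Finset.sum_fiberwise' _ fun x ↦ ν * x ^ 2]
  simp only [Finset.sum_const, ← Finset.sum_add_distrib, ← add_smul, card_add_card,
    ← Finset.smul_sum]

variable [Finite F]

lemma fiberExcess_mul_sq_add (hF : ringChar F ≠ 2) (hν : ¬IsSquare ν) [Finite X] {f : X → F} {ε : ℚ}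
    (hf : ∀ c, fiberExcess f (ν * c) = ε * fiberExcess f c) {a : F} (ha : a ≠ 0) (c : F) :
    fiberExcess (fun p : F × X ↦ a * p.1 ^ 2 + f p.2) (ν * c) =
      -ε * fiberExcess (fun p : F × X ↦ a * p.1 ^ 2 + f p.2) c := by
  have := Fintype.ofFinite F
  rw [fiberExcess_add (fun y ↦ a * y ^ 2) f, fiberExcess_add (fun y ↦ a * y ^ 2) f]
  have hsum : ∑ y, fiberExcess f (ν * c - a * y) = 0 := by
    rw [← sum_fiberExcess f]
    exact ((Equiv.mulLeft₀ a ha).trans (Equiv.subLeft (ν * c))).sum_comp (fiberExcess f)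
  have hsplit := sum_sq_add_sum_mul_sq hF hν fun y ↦ fiberExcess f (ν * c - a * y)
  have hscale (y : F) : fiberExcess f (ν * c - a * (ν * y ^ 2)) =
      ε * fiberExcess f (c - a * y ^ 2) := by
    rw [← hf]; ring_nf
  simp only [hsum, hscale, ← Finset.mul_sum, smul_zero] at hsplit
  linear_combination hsplit

lemma fiberExcess_weightedSumSquares (hF : ringChar F ≠ 2) (hν : ¬IsSquare ν) {m : ℕ}
    (w : Fin m → Fˣ) (c : F) :
    fiberExcess (QuadraticMap.weightedSumSquares F w) (ν * c) =
      (-1) ^ m * fiberExcess (QuadraticMap.weightedSumSquares F w) c := by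
  induction m generalizing c with
  | zero =>
    have hν0 : ν ≠ 0 := by rintro rfl; exact hν IsSquare.zero
    simp [fiberExcess, QuadraticMap.weightedSumSquares_apply, eq_comm (a := (0 : F)), hν0]
  | succ m ih =>
    have hcons := fiberExcess_congr (Fin.consEquiv fun _ : Fin (m + 1) ↦ F)
      (f := fun p : F × (Fin m → F) ↦
        w 0 * p.1 ^ 2 + QuadraticMap.weightedSumSquares F (Fin.tail w) p.2)
      (g := QuadraticMap.weightedSumSquares F w) fun p ↦ by
        simp [QuadraticMap.weightedSumSquares_apply, Fin.sum_univ_succ, Fin.consEquiv, Fin.tail,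
          Units.smul_def, sq]
    rw [← hcons, ← hcons, fiberExcess_mul_sq_add hF hν (ih _) (w 0).ne_zero, pow_succ, mul_neg_one]

end FiberExcess

section LCDCodes

variable {F V : Type*} [Field F] [AddCommGroup V] [Module F V] {B : BilinForm F V}

theorem natCard_self_eq_zero_of_odd_finrank [Finite F] [FiniteDimensional F V]
    (hF : ringChar F ≠ 2) (hs : B.IsSymm) (hB : B.Nondegenerate) (hodd : Odd (finrank F V)) :
    Nat.card {x // B x x = 0} = Nat.card F ^ (finrank F V - 1) := by
  have := Fintype.ofFinite F
  have : Invertible (2 : F) := invertibleOfNonzero (Ring.two_ne_zero hF)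
  have := Module.finite_of_finite F (M := V)
  obtain ⟨ν, hν⟩ := FiniteField.exists_nonsquare hF
  obtain ⟨w, ⟨e⟩⟩ := QuadraticForm.equivalent_weightedSumSquares_units_of_nondegenerate'
    B.toQuadraticMap (by rw [QuadraticMap.associated_left_inverse F hs.eq]; exact hB.1)
  have hzero : fiberExcess B.toQuadraticMap 0 = 0 := by
    have h := fiberExcess_weightedSumSquares hF hν w 0
    rw [mul_zero, hodd.neg_one_pow] at h
    rw [fiberExcess_congr e.toEquiv e.map_app]
    linarith
  have hcard : (Nat.card {x // B x x = 0} : ℚ) = Nat.card V / Nat.card F :=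
    sub_eq_zero.1 hzero
  rw [Module.natCard_eq_pow_finrank (K := F) (V := V), Nat.cast_pow, ← pow_sub_one_mul hodd.pos.ne',
    mul_div_cancel_right₀ _ (Nat.cast_ne_zero.2 Nat.card_pos.ne')] at hcard
  exact_mod_cast hcard

/-! ### Pairs of vectors spanning a nondegenerate plane -/

/-- The Gram determinant of the pair `x, y`; it is nonzero exactly when `x, y` is a basis of a
plane on which `B` is nondegenerate. -/
def gramDet (B : BilinForm F V) (x y : V) : F :=
  B x x * B y y - B x y * B y x

lemma gramDet_eq_zero_iff_of_isotropic (hs : B.IsSymm) {x : V} (hx : B x x = 0) (y : V) :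
    gramDet B x y = 0 ↔ B x y = 0 := by
  simp [gramDet, hx, hs.eq y x]

lemma gramDet_add_of_mem_span_singleton (hs : B.IsSymm) {x s z : V}
    (hsx : s ∈ Submodule.span F {x}) (hz : z ∈ B.orthogonal (Submodule.span F {x})) :
    gramDet B x (s + z) = B x x * B z z := by
  obtain ⟨t, rfl⟩ := Submodule.mem_span_singleton.1 hsx
  have hxz : B x z = 0 := hz x (Submodule.mem_span_singleton_self x)
  have hzx : B z x = 0 := by rw [hs.eq, hxz]
  simp only [gramDet, map_add, map_smul, LinearMap.add_apply, LinearMap.smul_apply, smul_eq_mul,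
    hxz, hzx]
  ring

lemma eq_zero_of_gramDet_ne_zero {x y : V} (h : gramDet B x y ≠ 0) {a b : F}
    (hx : B x (a • x + b • y) = 0) (hy : B y (a • x + b • y) = 0) : a = 0 ∧ b = 0 := by
  simp only [map_add, map_smul, smul_eq_mul] at hx hy
  refine ⟨(mul_eq_zero.1 ?_).resolve_right h, (mul_eq_zero.1 ?_).resolve_right h⟩ <;>
    rw [gramDet]
  · linear_combination B y y * hx - B x y * hy
  · linear_combination B x x * hy - B y x * hx

lemma finrank_span_pair_of_gramDet_ne_zero {x y : V} (h : gramDet B x y ≠ 0) :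
    finrank F (Submodule.span F {x, y}) = 2 := by
  have hli : LinearIndependent F ![x, y] := LinearIndependent.pair_iff.2 fun a b hab ↦
    eq_zero_of_gramDet_ne_zero h (by rw [hab, map_zero]) (by rw [hab, map_zero])
  rw [← Matrix.range_cons_cons_empty, finrank_span_eq_card hli, Fintype.card_fin]

lemma disjoint_orthogonal_span_pair_of_gramDet_ne_zero {x y : V} (h : gramDet B x y ≠ 0) :
    Disjoint (Submodule.span F {x, y}) (B.orthogonal (Submodule.span F {x, y})) := by
  refine Submodule.disjoint_def.2 fun z hz hz' ↦ ?_
  obtain ⟨a, b, rfl⟩ := Submodule.mem_span_pair.1 hz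
  obtain ⟨rfl, rfl⟩ := eq_zero_of_gramDet_ne_zero h
    (hz' x (Submodule.subset_span (by simp))) (hz' y (Submodule.subset_span (by simp)))
  simp

/-! ### Nondegenerate subspaces -/

lemma orthogonal_sup (U W : Submodule F V) :
    B.orthogonal (U ⊔ W) = B.orthogonal U ⊓ B.orthogonal W := by
  refine le_antisymm (le_inf (LinearMap.BilinForm.orthogonal_le le_sup_left)
    (LinearMap.BilinForm.orthogonal_le le_sup_right)) fun v ⟨hU, hW⟩ x hx ↦ ?_
  obtain ⟨u, hu, w, hw, rfl⟩ := Submodule.mem_sup.1 hx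
  have huv : B u v = 0 := hU u hu
  have hwv : B w v = 0 := hW w hw
  simp [huv, hwv]

lemma disjoint_orthogonal_sup_iff {U W : Submodule F V}
    (hW : Disjoint W (B.orthogonal W)) (hU : U ≤ B.orthogonal W) :
    Disjoint (U ⊔ W) (B.orthogonal (U ⊔ W)) ↔ Disjoint U (B.orthogonal U) := by
  have hmod : (U ⊔ W) ⊓ B.orthogonal W = U := by
    rw [sup_inf_assoc_of_le W hU, hW.eq_bot, sup_bot_eq]
  rw [disjoint_iff, disjoint_iff, orthogonal_sup, inf_comm (B.orthogonal U), ← inf_assoc, hmod]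

lemma disjoint_orthogonal_map_subtype_iff {U : Submodule F V} (D : Submodule F U) :
    Disjoint (D.map U.subtype) (B.orthogonal (D.map U.subtype)) ↔
      Disjoint D ((B.restrict U).orthogonal D) := by
  simp [Submodule.disjoint_def, LinearMap.BilinForm.mem_orthogonal_iff]

/-- The LCD codes of dimension `r` with respect to `B`: the `r`-dimensional subspaces that meet
their orthogonal subspace trivially, that is, on which `B` is nondegenerate. -/
def lcdCodes (B : BilinForm F V) (r : ℕ) : Set (Submodule F V) :=
  {C | finrank F C = r ∧ Disjoint C (B.orthogonal C)}

lemma span_pair_mem_lcdCodes {x y : V} (h : gramDet B x y ≠ 0) :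
    Submodule.span F {x, y} ∈ lcdCodes B 2 :=
  ⟨finrank_span_pair_of_gramDet_ne_zero h, disjoint_orthogonal_span_pair_of_gramDet_ne_zero h⟩

lemma disjoint_orthogonal_iff_inter_eq (hs : B.IsSymm) {C : Submodule F V} :
    Disjoint C (B.orthogonal C) ↔ (C : Set V) ∩ {x | ∀ c ∈ C, B x c = 0} = {0} := by
  have horth : {x | ∀ c ∈ C, B x c = 0} = (B.orthogonal C : Set V) := by
    ext x
    simp [LinearMap.BilinForm.mem_orthogonal_iff, hs.eq x]
  rw [horth, ← Submodule.coe_inf, disjoint_iff, ← SetLike.coe_set_eq, Submodule.bot_coe]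

variable [FiniteDimensional F V]

lemma restrict_orthogonal_nondegenerate (hs : B.IsSymm) (hB : B.Nondegenerate) {W : Submodule F V}
    (hW : Disjoint W (B.orthogonal W)) : (B.restrict (B.orthogonal W)).Nondegenerate := by
  refine B.nondegenerate_restrict_of_disjoint_orthogonal hs.isRefl ?_
  rw [LinearMap.BilinForm.orthogonal_orthogonal hB hs.isRefl]
  exact hW.symm

lemma lcdCodes_zero : lcdCodes B 0 = {⊥} := by
  ext C
  simp only [lcdCodes, Submodule.finrank_eq_zero, Set.mem_ofPred_eq, Set.mem_singleton_iff,
    and_iff_left_iff_imp]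
  rintro rfl
  exact disjoint_bot_left

lemma natCard_lcdCodes_ge (hs : B.IsSymm) {W : Submodule F V} {m r : ℕ} (hW : W ∈ lcdCodes B m) :
    Nat.card {C : Submodule F V // W ≤ C ∧ C ∈ lcdCodes B (r + m)} =
      Nat.card (lcdCodes (B.restrict (B.orthogonal W)) r) := by
  obtain ⟨hm, hW⟩ := hW
  have hcompl := (LinearMap.BilinForm.isCompl_orthogonal_iff_disjoint hs.isRefl).2 hW
  let e : Submodule F (B.orthogonal W) ≃o Set.Ici W :=
    (B.orthogonal W).mapIic.trans hcompl.symm.IicOrderIsoIci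
  have hmem (D : Submodule F (B.orthogonal W)) :
      D ∈ lcdCodes (B.restrict (B.orthogonal W)) r ↔
        (e D : Submodule F V) ∈ lcdCodes B (r + m) := by
    have he : (e D : Submodule F V) = D.map (B.orthogonal W).subtype ⊔ W := rfl
    have hD := Submodule.map_subtype_le _ D
    have hrank := Submodule.finrank_sup_add_finrank_inf_eq (D.map (B.orthogonal W).subtype) W
    rw [(hW.symm.mono_left hD).eq_bot, finrank_bot, Submodule.finrank_map_subtype_eq, hm] at hrank
    simp only [lcdCodes, Set.mem_ofPred_eq, he, disjoint_orthogonal_sup_iff hW hD,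
      disjoint_orthogonal_map_subtype_iff]
    exact and_congr_left fun _ ↦ by omega
  rw [Nat.card_congr (e.toEquiv.subtypeEquiv
    (q := fun C : Set.Ici W ↦ (C : Submodule F V) ∈ lcdCodes B (r + m)) hmem)]
  exact Nat.card_congr
    (Equiv.subtypeSubtypeEquivSubtypeInter (W ≤ ·) (· ∈ lcdCodes B (r + m))).symm

lemma natCard_lcdCodes_pair_mem (hs : B.IsSymm) {x y : V} (hxy : gramDet B x y ≠ 0) (r : ℕ) :
    Nat.card {C : lcdCodes B (r + 2) // x ∈ C.1 ∧ y ∈ C.1} =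
      Nat.card (lcdCodes (B.restrict (B.orthogonal (Submodule.span F {x, y}))) r) := by
  rw [← natCard_lcdCodes_ge hs (span_pair_mem_lcdCodes hxy)]
  refine Nat.card_congr ((Equiv.subtypeSubtypeEquivSubtypeInter (· ∈ lcdCodes B (r + 2))
    fun C ↦ x ∈ C ∧ y ∈ C).trans (Equiv.subtypeEquivRight fun C ↦ ?_))
  simp [Submodule.span_le, Set.insert_subset_iff, and_comm]

/-! ### Counting nondegenerate planes by their bases -/

lemma natCard_gramDet_eq_zero_of_isotropic (hs : B.IsSymm) (hB : B.Nondegenerate) {x : V}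
    (hx0 : x ≠ 0) (hx : B x x = 0) :
    Nat.card {y // gramDet B x y = 0} = Nat.card F ^ (finrank F V - 1) := by
  have hBx : B x ≠ 0 := fun h ↦ hx0 (hB.1 x fun y ↦ LinearMap.congr_fun h y)
  rw [← Module.Dual.finrank_ker_add_one_of_ne_zero hBx, Nat.add_sub_cancel,
    ← Module.natCard_eq_pow_finrank]
  exact Nat.card_congr (Equiv.subtypeEquivRight (gramDet_eq_zero_iff_of_isotropic hs hx))

variable [Finite F]

lemma natCard_gramDet_eq_zero_of_anisotropic (hF : ringChar F ≠ 2) (hs : B.IsSymm)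
    (hB : B.Nondegenerate) (heven : Even (finrank F V)) {x : V} (hx : B x x ≠ 0) :
    Nat.card {y // gramDet B x y = 0} = Nat.card F ^ (finrank F V - 1) := by
  have hcompl := LinearMap.BilinForm.isCompl_span_singleton_orthogonal hx
  set L := Submodule.span F {x}
  have hL : finrank F L = 1 :=
    finrank_span_singleton (LinearMap.BilinForm.ne_zero_of_not_isOrtho_self x hx)
  have hrank : 1 + finrank F (B.orthogonal L) = finrank F V := by
    rw [← hL, Submodule.finrank_add_eq_of_isCompl hcompl]
  have hodd : Odd (finrank F (B.orthogonal L)) := by grind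
  have hzero : Nat.card {z : B.orthogonal L // B z z = 0} =
      Nat.card F ^ (finrank F (B.orthogonal L) - 1) :=
    natCard_self_eq_zero_of_odd_finrank hF (hs.restrict _)
      (LinearMap.BilinForm.restrict_nondegenerate_orthogonal_spanSingleton B hB hs.isRefl hx) hodd
  have hiff (p : L × B.orthogonal L) :
      True ∧ B p.2 p.2 = 0 ↔ gramDet B x (Submodule.prodEquivOfIsCompl _ _ hcompl p) = 0 := by
    simp [gramDet_add_of_mem_span_singleton hs p.1.2 p.2.2, hx]
  rw [← Nat.card_congr ((Submodule.prodEquivOfIsCompl _ _ hcompl).toEquiv.subtypeEquiv hiff),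
    Nat.card_congr (Equiv.subtypeProdEquivProd
      (p := fun _ : L ↦ True) (q := fun z : B.orthogonal L ↦ B z z = 0)), Nat.card_prod,
    Nat.card_congr (Equiv.subtypeUnivEquiv fun _ ↦ trivial), Module.natCard_eq_pow_finrank (K := F),
    hzero, hL, ← pow_add, ← hrank, Nat.add_sub_assoc hodd.pos]

lemma natCard_gramDet_ne_zero (hF : ringChar F ≠ 2) (hs : B.IsSymm) (hB : B.Nondegenerate)
    (heven : Even (finrank F V)) {x : V} (hx0 : x ≠ 0) :
    (Nat.card {y // gramDet B x y ≠ 0} : ℚ) =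
      (Nat.card F : ℚ) ^ finrank F V - (Nat.card F : ℚ) ^ (finrank F V - 1) := by
  classical
  have := Module.finite_of_finite F (M := V)
  have hzero : Nat.card {y // gramDet B x y = 0} = Nat.card F ^ (finrank F V - 1) := by
    by_cases hx : B x x = 0
    · exact natCard_gramDet_eq_zero_of_isotropic hs hB hx0 hx
    · exact natCard_gramDet_eq_zero_of_anisotropic hF hs hB heven hx
  have hsum := Nat.card_congr (Equiv.sumCompl fun y ↦ gramDet B x y = 0)
  rw [Nat.card_sum, hzero, Module.natCard_eq_pow_finrank (K := F) (V := V)] at hsum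
  exact eq_sub_of_add_eq' (by exact_mod_cast hsum)

theorem natCard_pairs_gramDet_ne_zero (hF : ringChar F ≠ 2) (hs : B.IsSymm) (hB : B.Nondegenerate)
    (heven : Even (finrank F V)) :
    (Nat.card {p : V × V // gramDet B p.1 p.2 ≠ 0} : ℚ) = ((Nat.card F : ℚ) ^ finrank F V - 1) *
      ((Nat.card F : ℚ) ^ finrank F V - (Nat.card F : ℚ) ^ (finrank F V - 1)) := by
  classical
  have := Module.finite_of_finite F (M := V)
  have := Fintype.ofFinite V
  have hzero : Nat.card {y // gramDet B 0 y ≠ 0} = 0 := by simp [gramDet]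
  rw [Nat.card_congr (Equiv.subtypeProdEquivSigmaSubtype fun x y ↦ gramDet B x y ≠ 0),
    Nat.card_sigma, ← Finset.sum_erase (f := fun x ↦ Nat.card {y // gramDet B x y ≠ 0}) _ hzero,
    Nat.cast_sum,
    Finset.sum_congr rfl fun x hx ↦
      natCard_gramDet_ne_zero hF hs hB heven (Finset.ne_of_mem_erase hx),
    Finset.sum_const, nsmul_eq_mul, Finset.cast_card_erase_of_mem (Finset.mem_univ _),
    Finset.card_univ, ← Nat.card_eq_fintype_card, Module.natCard_eq_pow_finrank (K := F) (V := V),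
    Nat.cast_pow]

/-! ### Counting LCD codes -/

lemma natCard_pairs_mem_of_mem_lcdCodes (hF : ringChar F ≠ 2) (hs : B.IsSymm) {r : ℕ} (hr : Even r)
    {C : Submodule F V} (hC : C ∈ lcdCodes B r) :
    (Nat.card {p : {p : V × V // gramDet B p.1 p.2 ≠ 0} // p.1.1 ∈ C ∧ p.1.2 ∈ C} : ℚ) =
      ((Nat.card F : ℚ) ^ r - 1) * ((Nat.card F : ℚ) ^ r - (Nat.card F : ℚ) ^ (r - 1)) := by
  obtain ⟨rfl, hC⟩ := hC
  rw [← natCard_pairs_gramDet_ne_zero hF (hs.restrict C)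
    (B.nondegenerate_restrict_of_disjoint_orthogonal hs.isRefl hC) hr]
  exact congrArg Nat.cast (Nat.card_congr
    { toFun p := ⟨(⟨p.1.1.1, p.2.1⟩, ⟨p.1.1.2, p.2.2⟩), p.1.2⟩
      invFun p := ⟨⟨(p.1.1, p.1.2), p.2⟩, p.1.1.2, p.1.2.2⟩
      left_inv _ := rfl
      right_inv _ := rfl })

theorem natCard_lcdCodes_add_two_mul (hF : ringChar F ≠ 2) (hs : B.IsSymm) (hB : B.Nondegenerate)
    (heven : Even (finrank F V)) {r d : ℕ} (hr : Even r) (hd : finrank F V = d + (r + 2)) {N : ℚ}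
    (hN : ∀ W ∈ lcdCodes B 2, (Nat.card (lcdCodes (B.restrict (B.orthogonal W)) r) : ℚ) = N) :
    Nat.card (lcdCodes B (r + 2)) * ((Nat.card F : ℚ) ^ (r + 2) - 1) =
      (Nat.card F : ℚ) ^ d * ((Nat.card F : ℚ) ^ finrank F V - 1) * N := by
  have := Module.finite_of_finite F (M := V)
  have hcount := natCard_mul_eq_natCard_mul (S := ℚ) (α := {p : V × V // gramDet B p.1 p.2 ≠ 0})
    (β := lcdCodes B (r + 2)) (R := fun p C ↦ p.1.1 ∈ C.1 ∧ p.1.2 ∈ C.1)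
    (fun p ↦ by rw [natCard_lcdCodes_pair_mem hs p.2, hN _ (span_pair_mem_lcdCodes p.2)])
    fun C ↦ natCard_pairs_mem_of_mem_lcdCodes hF hs (hr.add even_two) C.2
  rw [natCard_pairs_gramDet_ne_zero hF hs hB heven, hd, show d + (r + 2) - 1 = d + (r + 1) from rfl,
    show r + 2 - 1 = r + 1 from rfl] at hcount
  have hq : (1 : ℚ) < Nat.card F := by exact_mod_cast Finite.one_lt_card (α := F)
  have hfactor : (Nat.card F : ℚ) ^ (r + 1) * (Nat.card F - 1) ≠ 0 :=
    mul_ne_zero (pow_ne_zero _ (by positivity)) (sub_ne_zero.2 hq.ne')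
  refine mul_right_cancel₀ hfactor ?_
  rw [hd]
  linear_combination -hcount

theorem natCard_lcdCodes_two_mul (hF : ringChar F ≠ 2) (hs : B.IsSymm) (hB : B.Nondegenerate)
    {a k : ℕ} (hV : finrank F V = 2 * k) (hak : a ≤ k) :
    (Nat.card (lcdCodes B (2 * a)) : ℚ) =
      (Nat.card F : ℚ) ^ (2 * a * (k - a)) * gaussBinom (Nat.card F ^ 2) k a := by
  induction a generalizing V k with
  | zero => simp [lcdCodes_zero, gaussBinom]
  | succ a ih =>
    obtain ⟨b, rfl⟩ := Nat.exists_eq_add_of_le' hak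
    have hrank {W : Submodule F V} (hW : W ∈ lcdCodes B 2) :
        finrank F (B.orthogonal W) = 2 * (b + a) := by
      rw [LinearMap.BilinForm.finrank_orthogonal hB, hV, hW.1]
      omega
    have hrec := natCard_lcdCodes_add_two_mul hF hs hB (hV ▸ even_two_mul _) (d := 2 * b)
      (even_two_mul a) (by omega) fun W hW ↦ ih (hs.restrict _)
        (restrict_orthogonal_nondegenerate hs hB hW.2) (hrank hW) (Nat.le_add_left a b)
    have hden : ((Nat.card F : ℚ) ^ 2) ^ (a + 1) - 1 ≠ 0 := by
      rw [← pow_mul]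
      exact sub_ne_zero.2 (one_lt_pow₀ (by exact_mod_cast Finite.one_lt_card) (by simp)).ne'
    rw [hV, Nat.add_sub_cancel] at hrec
    rw [← add_assoc, gaussBinom_succ_succ, add_assoc, Nat.add_sub_cancel, Nat.cast_pow,
      div_mul_eq_mul_div, mul_div_assoc', eq_div_iff hden]
    linear_combination hrec

theorem stmt18_general (hF : ringChar F ≠ 2) (hs : B.IsSymm) (hB : B.Nondegenerate) {n r : ℕ}
    (hV : finrank F V = n) (hn : Even n) (hr : Even r) (hrn : r ≤ n) :
    (Nat.card {C : Submodule F V //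
        finrank F C = r ∧ (C : Set V) ∩ {x | ∀ c ∈ C, B x c = 0} = {0}} : ℚ) =
      (Nat.card F : ℚ) ^ ((r * (n - r)) / 2) *
        gaussBinom (Nat.card F ^ 2) (n / 2) (r / 2) := by
  obtain ⟨k, rfl⟩ := even_iff_exists_two_mul.1 hn
  obtain ⟨a, rfl⟩ := even_iff_exists_two_mul.1 hr
  have hexp : 2 * a * (2 * k - 2 * a) / 2 = 2 * a * (k - a) := by
    rw [← Nat.mul_sub, Nat.mul_left_comm, Nat.mul_div_cancel_left _ two_pos]
  simp only [← disjoint_orthogonal_iff_inter_eq hs, hexp, Nat.mul_div_cancel_left _ two_pos]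
  exact natCard_lcdCodes_two_mul hF hs hB hV (by omega)

end LCDCodes

lemma dotProductBilin_isSymm {ι R : Type*} [Fintype ι] [CommSemiring R] :
    LinearMap.BilinForm.IsSymm (dotProductBilin R R : BilinForm R (ι → R)) :=
  ⟨dotProduct_comm⟩

lemma dotProductBilin_nondegenerate {ι R : Type*} [Fintype ι] [CommSemiring R] :
    (dotProductBilin R R : BilinForm R (ι → R)).Nondegenerate :=
  ⟨fun _ ↦ dotProduct_eq_zero _, fun v h ↦
    dotProduct_eq_zero v fun w ↦ (dotProduct_comm v w).trans (h w)⟩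

lemma ringChar_ne_two_of_odd_card {K : Type*} [Field K] [Fintype K] (h : Odd (Fintype.card K)) :
    ringChar K ≠ 2 := fun h2 ↦
  Nat.not_even_iff_odd.2 h (Nat.even_iff.2 (FiniteField.even_card_iff_char_two.1 h2))

/-- For an odd prime power `q` and even integers `n, r` with `1 ≤ r ≤ n-1`, the number
of Euclidean LCD codes of length `n` and dimension `r` over `F_q` equals
`q^{r(n-r)/2} · [n/2 choose r/2]_{q²}`. -/
theorem stmt18 {F : Type*} [Field F] [Fintype F] (q n r : ℕ)
    (hq : IsPrimePow q) (hodd : Odd q) (hcard : Fintype.card F = q)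
    (hneven : Even n) (hreven : Even r) (hr : 1 ≤ r) (hrn : r ≤ n - 1) :
    (Nat.card {C : Submodule F (Fin n → F) //
        Module.finrank F C = r ∧
        (C : Set (Fin n → F)) ∩ {x | ∀ c ∈ C, ∑ i, x i * c i = 0} = {0}} : ℚ) =
      (q : ℚ) ^ ((r * (n - r)) / 2) * gaussBinom (q ^ 2) (n / 2) (r / 2) := by
  rw [← hcard, ← Nat.card_eq_fintype_card]
  exact stmt18_general (B := dotProductBilin F F) (ringChar_ne_two_of_odd_card (hcard ▸ hodd))
    dotProductBilin_isSymm dotProductBilin_nondegenerate (finrank_fin_fun F) hneven hreven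
    (by omega)
end
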